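/- Under the hypotheses of the conditional metastability theorem for (MAR*) — i.e. H a real Hilbert space, A, B monotone operators with resolvents jA, jB of parameter 1/R, (y_n) generated by (MAR*), q a common zero with N ≥ max{2‖u − q‖, ‖x₀ − q‖, ‖q‖} (N ∈ ℕ, N ≥ 1), η a monotone functional with: for all k and monotone f there is n ≤ η(k,f) with ‖jA(y_m) − y_m‖ ≤ 1/(k+1) and ‖jB(y_m) − y_m‖ ≤ 1/(k+1) for all m ∈ [n, f(n)]; A a monotone rate of divergence for Σ α_n = ∞; 1/R ≤ β_n, μ_n ≤ t(n) with t monotone — assume additionally that η' : ℕ × (ℕ→ℕ) → ℕ is a monotone functional such that for all k ∈ ℕ and all monotone f there is n ≤ η'(k,f) with ‖y_{m+1} − y_m‖ ≤ 1/(k+1) for all m ∈ [n, f(n)]. Then for all k ∈ ℕ and all monotone f : ℕ → ℕ there exists n ≤ μ(k,f) such that ‖y_i − y_j‖ ≤ 1/(k+1) for all i, j ∈ [n, f(n)], where μ(k,f) := Ψ[Φ[ψ₁, ψ₂]](k,f) with ψ₁(k,f) := η'(4k+3, m ↦ 2f(m)), ψ₂(k,f) := μ̃(4k+3, f) (μ̃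 the bound from the conditional metastability theorem), Ψ[ψ](k,f) := 2ψ(k, g_f)+1 with g_f(m) := f(2m+1), Φ[φ₁,φ₂](k,f) := min{Φ̄[φ₁,φ₂](k,f), Φ̄[φ₂,φ₁](k,f)}, and Φ̄[φ₁,φ₂](k,f) := max{θ, φ₂(k, f̃[θ])} with f̄(m) := f̃[φ₂(k, f̃[m])](m) and θ := φ₁(k, f̄). -/

import Mathlib

/-!
The sequence `(y (2n))` is compared with an approximate projection of `u` onto the common zeros.

* Quantitative projection (`exists_approx_proj`): starting from `q` and passing to better and better
  approximate common fixed points of `jA`, `jB`, the quantity `‖u - x‖²` starts at most `N²/4`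
  and cannot drop `4N⁴(k+1)²` times by more than `1/(16N²(k+1)²)`. Where it stops dropping, convexity
  of approximate fixed point sets (`convex_approx`) gives the variational inequality
  `⟪u - x, v - x⟫ ≤ 1/(k+1)`. Inserting `v = y m` via `η` gives `exists_approx_proj_seq`.
* Recursion (`step_rec`): firm nonexpansiveness of resolvents shows that
  `max (‖y - x‖² - c) 0` contracts by `1 - α` in each odd step and does not increase in each even
  step, up to an error controlled by how well `x` is fixed. Divergence of `∑ α` then makes
  `‖y (2i) - x‖ ≤ 1/(k+1)` on a metastability interval bounded by `muTilde`
  (`even_metastable`).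
* Combination (`phiMin_spec`): two metastability statements with monotone bounds hold on a
  common interval, with bound `PhiMin`. On it, every `y i` is within `1/(4(k+1))` of an
  even-indexed term, which is itself within `1/(4(k+1))` of the approximate projection.
-/

open scoped RealInnerProductSpace

/-- A set-valued operator on a real Hilbert space is monotone. -/
def MonotoneOp {H : Type*} [NormedAddCommGroup H] [InnerProductSpace ℝ H]
    (A : H → Set H) : Prop :=
  ∀ x x' y y' : H, y ∈ A x → y' ∈ A x' → 0 ≤ ⟪x - x', y - y'⟫

/-- `j` is the resolvent of `A` with parameter `1/R`. -/
def IsResolvent {H : Type*} [NormedAddCommGroup H] [InnerProductSpace ℝ H]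
    (A : H → Set H) (R : ℕ) (j : H → H) : Prop :=
  ∀ x : H, (R : ℝ) • (x - j x) ∈ A (j x)

/-- `(y n)` is generated by the exact method of alternating resolvents (MAR*). -/
def MAR {H : Type*} [NormedAddCommGroup H] [InnerProductSpace ℝ H]
    (A B : H → Set H) (u x₀ : H) (α lam β μ : ℕ → ℝ) (y : ℕ → H) : Prop :=
  y 0 = x₀ ∧ ∀ n : ℕ,
    (1 / β n) • (α n • u + (1 - α n) • y (2*n) - y (2*n+1)) ∈ A (y (2*n+1)) ∧
    (1 / μ n) • (lam n • u + (1 - lam n) • y (2*n+1) - y (2*n+2)) ∈ B (y (2*n+2))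

/-- `g ≤* f`: strong majorizability. -/
def StrongMaj (g f : ℕ → ℕ) : Prop :=
  ∀ m n : ℕ, m ≤ n → g m ≤ f n ∧ f m ≤ f n

/-- A functional `φ : ℕ × (ℕ→ℕ) → ℕ` is monotone. -/
def MonoFunctional (φ : ℕ → (ℕ → ℕ) → ℕ) : Prop :=
  ∀ (m n : ℕ) (f g : ℕ → ℕ), m ≤ n → StrongMaj g f → φ m g ≤ φ n f

/-- `f̃[M](m) = f(max{m,M})`. -/
def ftil (f : ℕ → ℕ) (M : ℕ) : ℕ → ℕ := fun m => f (max m M)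

/-- The bound `ζ(k,h) = 24N (w_{h,N}^{(E)}(0)+1)²`. -/
def zetaBound (N k : ℕ) (h : ℕ → ℕ) : ℕ :=
  24 * N *
    (((fun m => max (h (24*N*(m+1)^2)) (24*N*(m+1)^2))^[4*N^4*(k+1)^2] 0) + 1)^2

/-- The bound `Ω_η(k,h) = η(ζ(k,ĥ),h)` with `ĥ(m) = h(η(m,h))`. -/
def OmegaBound (N : ℕ) (η : ℕ → (ℕ → ℕ) → ℕ) (k : ℕ) (h : ℕ → ℕ) : ℕ :=
  η (zetaBound N k (fun m => h (η m h))) h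

/-- `σ₁(k,n) = A(n + ⌈ln(16N²(k+1))⌉) + 1`. -/
noncomputable def sigma1 (Ar : ℕ → ℕ) (N k n : ℕ) : ℕ :=
  Ar (n + ⌈Real.log (16*(N:ℝ)^2*((k:ℝ)+1))⌉₊) + 1

/-- The bound `μ̃(k,f)` of the conditional metastability theorem. -/
noncomputable def muTilde (Ar : ℕ → ℕ) (N R : ℕ) (t : ℕ → ℕ)
    (η : ℕ → (ℕ → ℕ) → ℕ) (k : ℕ) (f : ℕ → ℕ) : ℕ :=
  sigma1 Ar N ((k+1)^2 - 1)
    (OmegaBound N η (16*(k+1)^2 - 1)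
      (fun n => 2 * (64*N*R*(k+1)^2 * (f (sigma1 Ar N ((k+1)^2 - 1) n) + 1) *
        t (f (sigma1 Ar N ((k+1)^2 - 1) n)) - 1) + 2))

/-- `Φ̄[φ₁,φ₂](k,f) = max{θ, φ₂(k,f̃[θ])}` with `f̄(m) = f̃[φ₂(k,f̃[m])](m)`, `θ = φ₁(k,f̄)`. -/
def PhiBar (φ₁ φ₂ : ℕ → (ℕ → ℕ) → ℕ) (k : ℕ) (f : ℕ → ℕ) : ℕ :=
  max (φ₁ k (fun m => ftil f (φ₂ k (ftil f m)) m))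
    (φ₂ k (ftil f (φ₁ k (fun m => ftil f (φ₂ k (ftil f m)) m))))

/-- `Φ[φ₁,φ₂](k,f) = min{Φ̄[φ₁,φ₂](k,f), Φ̄[φ₂,φ₁](k,f)}`. -/
def PhiMin (φ₁ φ₂ : ℕ → (ℕ → ℕ) → ℕ) (k : ℕ) (f : ℕ → ℕ) : ℕ :=
  min (PhiBar φ₁ φ₂ k f) (PhiBar φ₂ φ₁ k f)

/-- `Ψ[ψ](k,f) = 2ψ(k,g_f)+1` with `g_f(m) = f(2m+1)`. -/
def PsiBound (ψ : ℕ → (ℕ → ℕ) → ℕ) (k : ℕ) (f : ℕ → ℕ) : ℕ :=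
  2 * ψ k (fun m => f (2*m+1)) + 1

/-! ### Combining metastability bounds -/

lemma phiBar_spec (φ₁ φ₂ : ℕ → (ℕ → ℕ) → ℕ) (k : ℕ) (Q₁ Q₂ : ℕ → ℕ → Prop)
    (hQ₁ : ∀ a b a' b', a ≤ a' → b' ≤ b → Q₁ a b → Q₁ a' b')
    (hQ₂ : ∀ a b a' b', a ≤ a' → b' ≤ b → Q₂ a b → Q₂ a' b')
    (h₁ : ∀ f, Monotone f → ∃ n ≤ φ₁ k f, Q₁ n (f n))
    (h₂ : ∀ f, Monotone f → ∃ n ≤ φ₂ k f, Q₂ n (f n))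
    (m₂ : ∀ f g : ℕ → ℕ, Monotone f → Monotone g → f ≤ g → φ₂ k f ≤ φ₂ k g)
    (f : ℕ → ℕ) (hf : Monotone f) :
    ∃ n ≤ PhiBar φ₁ φ₂ k f, Q₁ n (f n) ∧ Q₂ n (f n) := by
  have hft : ∀ M, Monotone (ftil f M) := fun M a b hab => hf (max_le_max hab le_rfl)
  have hφ : ∀ a b, a ≤ b → φ₂ k (ftil f a) ≤ φ₂ k (ftil f b) := fun a b hab =>
    m₂ _ _ (hft a) (hft b) (fun m => hf (max_le_max le_rfl hab))
  have hbar : Monotone (fun m => ftil f (φ₂ k (ftil f m)) m) := fun a b hab =>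
    hf (max_le_max hab (hφ a b hab))
  obtain ⟨n₁, hn₁, q₁⟩ := h₁ _ hbar
  obtain ⟨n₂, hn₂, q₂⟩ := h₂ _ (hft n₁)
  refine ⟨max n₁ n₂, ?_, ?_, ?_⟩
  · exact max_le_max hn₁ (hn₂.trans (hφ _ _ hn₁))
  · exact hQ₁ _ _ _ _ (le_max_left _ _) (hf (max_le_max le_rfl hn₂)) q₁
  · refine hQ₂ _ _ _ _ (le_max_right _ _) ?_ q₂
    exact hf (by rw [max_comm])

lemma phiMin_spec (φ₁ φ₂ : ℕ → (ℕ → ℕ) → ℕ) (k : ℕ) (Q₁ Q₂ : ℕ → ℕ → Prop)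
    (hQ₁ : ∀ a b a' b', a ≤ a' → b' ≤ b → Q₁ a b → Q₁ a' b')
    (hQ₂ : ∀ a b a' b', a ≤ a' → b' ≤ b → Q₂ a b → Q₂ a' b')
    (h₁ : ∀ f, Monotone f → ∃ n ≤ φ₁ k f, Q₁ n (f n))
    (h₂ : ∀ f, Monotone f → ∃ n ≤ φ₂ k f, Q₂ n (f n))
    (m₁ : ∀ f g : ℕ → ℕ, Monotone f → Monotone g → f ≤ g → φ₁ k f ≤ φ₁ k g)
    (m₂ : ∀ f g : ℕ → ℕ, Monotone f → Monotone g → f ≤ g → φ₂ k f ≤ φ₂ k g)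
    (f : ℕ → ℕ) (hf : Monotone f) :
    ∃ n ≤ PhiMin φ₁ φ₂ k f, Q₁ n (f n) ∧ Q₂ n (f n) := by
  rcases le_total (PhiBar φ₁ φ₂ k f) (PhiBar φ₂ φ₁ k f) with h | h
  · obtain ⟨n, hn, q⟩ := phiBar_spec φ₁ φ₂ k Q₁ Q₂ hQ₁ hQ₂ h₁ h₂ m₂ f hf
    exact ⟨n, hn.trans (le_min le_rfl h), q⟩
  · obtain ⟨n, hn, q⟩ := phiBar_spec φ₂ φ₁ k Q₂ Q₁ hQ₂ hQ₁ h₂ h₁ m₁ f hf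
    exact ⟨n, hn.trans (le_min h le_rfl), q.2, q.1⟩

/-! ### Monotonicity of the bounds -/

lemma strongMaj_of_le {f g : ℕ → ℕ} (hg : Monotone g) (h : f ≤ g) : StrongMaj f g :=
  fun m n hmn => ⟨(h m).trans (hg hmn), hg hmn⟩

lemma zetaBound_mono (N k : ℕ) {f g : ℕ → ℕ} (hg : Monotone g) (h : f ≤ g) :
    zetaBound N k f ≤ zetaBound N k g := by
  have key : ∀ i : ℕ,
      ((fun m => max (f (24*N*(m+1)^2)) (24*N*(m+1)^2))^[i] 0) ≤
        ((fun m => max (g (24*N*(m+1)^2)) (24*N*(m+1)^2))^[i] 0) := by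
    intro i
    induction i with
    | zero => simp
    | succ i ih =>
      rw [Function.iterate_succ_apply', Function.iterate_succ_apply']
      have h24 := Nat.mul_le_mul_left (24*N) (Nat.pow_le_pow_left (Nat.succ_le_succ ih) 2)
      exact max_le_max ((h _).trans (hg h24)) h24
  unfold zetaBound
  exact Nat.mul_le_mul_left _ (Nat.pow_le_pow_left (Nat.succ_le_succ (key _)) 2)

lemma omegaBound_mono (N : ℕ) {η : ℕ → (ℕ → ℕ) → ℕ} (hη : MonoFunctional η) (k : ℕ)
    {f g : ℕ → ℕ} (hg : Monotone g) (h : f ≤ g) :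
    OmegaBound N η k f ≤ OmegaBound N η k g := by
  have hs := strongMaj_of_le hg h
  have hsg := strongMaj_of_le hg le_rfl
  refine hη _ _ _ _ (zetaBound_mono N k ?_ ?_) hs
  · exact fun a b hab => hg (hη _ _ _ _ hab hsg)
  · exact fun m => (h _).trans (hg (hη _ _ _ _ le_rfl hs))

lemma sigma1_mono {Ar : ℕ → ℕ} (hAr : Monotone Ar) (N k : ℕ) : Monotone (sigma1 Ar N k) :=
  fun _ _ hab => Nat.succ_le_succ (hAr (Nat.add_le_add_right hab _))

/-- The counterfunction to which `OmegaBound` is applied in `muTilde`. -/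
noncomputable def innerFun (Ar : ℕ → ℕ) (N R : ℕ) (t : ℕ → ℕ) (k : ℕ) (f : ℕ → ℕ) : ℕ → ℕ :=
  fun n => 2 * (64*N*R*(k+1)^2 * (f (sigma1 Ar N ((k+1)^2 - 1) n) + 1) *
        t (f (sigma1 Ar N ((k+1)^2 - 1) n)) - 1) + 2

lemma innerFun_mono {Ar : ℕ → ℕ} (hAr : Monotone Ar) (N R : ℕ) {t : ℕ → ℕ} (ht : Monotone t)
    (k : ℕ) {f : ℕ → ℕ} (hf : Monotone f) : Monotone (innerFun Ar N R t k f) := by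
  intro a b hab
  have h1 := hf (sigma1_mono hAr N ((k+1)^2 - 1) hab)
  have h2 := ht h1
  unfold innerFun
  gcongr

lemma muTilde_mono {Ar : ℕ → ℕ} (hAr : Monotone Ar) (N R : ℕ) {t : ℕ → ℕ} (ht : Monotone t)
    {η : ℕ → (ℕ → ℕ) → ℕ} (hη : MonoFunctional η) (k : ℕ) {f g : ℕ → ℕ}
    (hg : Monotone g) (h : f ≤ g) : muTilde Ar N R t η k f ≤ muTilde Ar N R t η k g := by
  refine sigma1_mono hAr N _ (omegaBound_mono N hη _ (innerFun_mono hAr N R ht k hg) ?_)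
  intro n
  have h1 := h (sigma1 Ar N ((k+1)^2 - 1) n)
  have h2 := ht h1
  show 2 * (_ - 1) + 2 ≤ 2 * (_ - 1) + 2
  gcongr

/-! ### Resolvents and approximate fixed points -/

section Hilbert

variable {H : Type*} [NormedAddCommGroup H] [InnerProductSpace ℝ H]

lemma le_of_sq_le_of_nonneg {a b : ℝ} (h : a^2 ≤ b^2) (hb : 0 ≤ b) : a ≤ b :=
  (abs_le_of_sq_le_sq' h hb).2

lemma norm_le_of_sq_le_inner {a b : H} (h : ‖a‖^2 ≤ ⟪a, b⟫) : ‖a‖ ≤ ‖b‖ := by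
  have h1 := real_inner_le_norm a b
  by_contra! hlt
  have : 0 < ‖a‖ := (norm_nonneg b).trans_lt hlt
  nlinarith

lemma resolvent_nonexp {A : H → Set H} (hA : MonotoneOp A) {R : ℕ} (hR : 1 ≤ R) {j : H → H}
    (hj : IsResolvent A R j) (x z : H) : ‖j x - j z‖ ≤ ‖x - z‖ := by
  have h := hA _ _ _ _ (hj x) (hj z)
  rw [← smul_sub, inner_smul_right] at h
  have hR0 : (0:ℝ) < R := by exact_mod_cast hR
  have h2 : 0 ≤ ⟪j x - j z, (x - j x) - (z - j z)⟫ := nonneg_of_mul_nonneg_right h hR0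
  apply norm_le_of_sq_le_inner
  have e : (x - j x) - (z - j z) = (x - z) - (j x - j z) := by abel
  rw [e, inner_sub_right, real_inner_self_eq_norm_sq] at h2
  linarith

lemma resolvent_zero {A : H → Set H} (hA : MonotoneOp A) {R : ℕ} (hR : 1 ≤ R) {j : H → H}
    (hj : IsResolvent A R j) {q : H} (hq : (0:H) ∈ A q) : j q = q := by
  have h := hA _ _ _ _ (hj q) hq
  have hR0 : (0:ℝ) < R := by exact_mod_cast hR
  rw [sub_zero, inner_smul_right] at h
  have h2 : 0 ≤ ⟪j q - q, q - j q⟫ := nonneg_of_mul_nonneg_right h hR0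
  rw [← neg_sub (j q) q, inner_neg_right, real_inner_self_eq_norm_sq] at h2
  have : ‖j q - q‖ = 0 := by nlinarith [norm_nonneg (j q - q)]
  exact sub_eq_zero.mp (norm_eq_zero.mp this)

lemma norm_sq_convex_sub (s : ℝ) (x v w : H) :
    ‖(1-s) • x + s • v - w‖^2 =
      (1-s) * ‖x - w‖^2 + s * ‖v - w‖^2 - s*(1-s) * ‖x - v‖^2 := by
  have e1 : (1-s) • x + s • v - w = (1-s) • (x - w) + s • (v - w) := by module
  have e2 : x - v = (x - w) - (v - w) := by abel
  rw [e1, e2, norm_add_sq_real, norm_sub_sq_real (x - w) (v - w), norm_smul, norm_smul, inner_smul_left,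
    inner_smul_right, mul_pow, mul_pow, Real.norm_eq_abs, Real.norm_eq_abs, sq_abs, sq_abs]
  simp only [conj_trivial]
  ring

lemma convex_dist_le {N s : ℝ} (hs0 : 0 ≤ s) (hs1 : s ≤ 1) {x v q : H}
    (hx : ‖x - q‖ ≤ N) (hv : ‖v - q‖ ≤ N) : ‖(1-s) • x + s • v - q‖ ≤ N := by
  have e1 : (1-s) • x + s • v - q = (1-s) • (x - q) + s • (v - q) := by module
  rw [e1]
  refine (norm_add_le _ _).trans ?_
  rw [norm_smul, norm_smul, Real.norm_eq_abs, Real.norm_eq_abs, abs_of_nonneg hs0,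
    abs_of_nonneg (sub_nonneg.mpr hs1)]
  nlinarith

/-- Convex combinations of `δ`-fixed points at distance at most `D` are
`√(δ² + Dδ)`-fixed points of a nonexpansive map. -/
lemma convex_approx {T : H → H} (hT : ∀ x z, ‖T x - T z‖ ≤ ‖x - z‖) {δ D s : ℝ}
    (hs0 : 0 ≤ s) (hs1 : s ≤ 1) {x v : H} (hx : ‖T x - x‖ ≤ δ) (hv : ‖T v - v‖ ≤ δ)
    (hD : ‖x - v‖ ≤ D) :
    ‖T ((1-s) • x + s • v) - ((1-s) • x + s • v)‖^2 ≤ δ^2 + D * δ := by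
  set z := (1-s) • x + s • v with hz
  have hδ : 0 ≤ δ := (norm_nonneg _).trans hx
  have h1 : ‖x - T z‖ ≤ δ + s * ‖x - v‖ := by
    have e : x - z = s • (x - v) := by rw [hz]; module
    have h := hT x z
    rw [e, norm_smul, Real.norm_eq_abs, abs_of_nonneg hs0] at h
    have := norm_sub_le_norm_sub_add_norm_sub x (T x) (T z)
    rw [norm_sub_rev x (T x)] at this
    linarith
  have h2 : ‖v - T z‖ ≤ δ + (1-s) * ‖x - v‖ := by
    have e : v - z = (-(1-s)) • (x - v) := by rw [hz]; module
    have h := hT v z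
    rw [e, norm_smul, Real.norm_eq_abs, abs_neg, abs_of_nonneg (sub_nonneg.mpr hs1)] at h
    have := norm_sub_le_norm_sub_add_norm_sub v (T v) (T z)
    rw [norm_sub_rev v (T v)] at this
    linarith
  rw [norm_sub_rev, hz, norm_sq_convex_sub, ← hz]
  set d := ‖x - v‖
  have hd : 0 ≤ d := norm_nonneg _
  have s1 : ‖x - T z‖^2 ≤ (δ + s * d)^2 := pow_le_pow_left₀ (norm_nonneg _) h1 2
  have s2 : ‖v - T z‖^2 ≤ (δ + (1-s) * d)^2 := pow_le_pow_left₀ (norm_nonneg _) h2 2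
  have s3 := mul_le_mul_of_nonneg_left s1 (sub_nonneg.mpr hs1)
  have s4 := mul_le_mul_of_nonneg_left s2 hs0
  have s5 : (1-s) * (δ + s * d)^2 + s * (δ + (1-s) * d)^2 - s*(1-s) * d^2
      = δ^2 + 4*(s*(1-s))*(d*δ) := by ring
  have s6 : 4*(s*(1-s)) ≤ 1 := by nlinarith [sq_nonneg (2*s-1)]
  have s7 : d*δ ≤ D*δ := mul_le_mul_of_nonneg_right hD hδ
  have s8 : 4*(s*(1-s))*(d*δ) ≤ 1*(d*δ) := mul_le_mul_of_nonneg_right s6 (mul_nonneg hd hδ)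
  linarith

/-- Points of the ball of radius `N` around `q` that are moved by at most `1/(m+1)` by
both `S` and `T`. -/
def ApproxFix (S T : H → H) (q : H) (N m : ℕ) : Set H :=
  {x | ‖x - q‖ ≤ N ∧ ‖S x - x‖ ≤ 1/((m:ℝ)+1) ∧ ‖T x - x‖ ≤ 1/((m:ℝ)+1)}

lemma approxFix_anti (S T : H → H) (q : H) (N : ℕ) {m n : ℕ} (h : m ≤ n) :
    ApproxFix S T q N n ⊆ ApproxFix S T q N m := by
  rintro x ⟨h1, h2, h3⟩
  have : 1/((n:ℝ)+1) ≤ 1/((m:ℝ)+1) := by gcongr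
  exact ⟨h1, h2.trans this, h3.trans this⟩

lemma approxFix_convex {S T : H → H} (hS : ∀ x z, ‖S x - S z‖ ≤ ‖x - z‖)
    (hT : ∀ x z, ‖T x - T z‖ ≤ ‖x - z‖) {q : H} {N m : ℕ} (hN : 1 ≤ N) {s : ℝ}
    (hs0 : 0 ≤ s) (hs1 : s ≤ 1) {x v : H} (hx : x ∈ ApproxFix S T q N (24*N*(m+1)^2))
    (hv : v ∈ ApproxFix S T q N (24*N*(m+1)^2)) :
    (1-s) • x + s • v ∈ ApproxFix S T q N m := by
  obtain ⟨x1, x2, x3⟩ := hx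
  obtain ⟨v1, v2, v3⟩ := hv
  have hD : ‖x - v‖ ≤ 2 * (N:ℝ) := by
    have := norm_sub_le_norm_sub_add_norm_sub x q v
    rw [norm_sub_rev q v] at this
    linarith
  have hN' : (1:ℝ) ≤ N := by exact_mod_cast hN
  have hm : (0:ℝ) < (m:ℝ)+1 := by positivity
  have bound : (1/(((24*N*(m+1)^2 : ℕ):ℝ)+1))^2 + 2*(N:ℝ) * (1/(((24*N*(m+1)^2 : ℕ):ℝ)+1))
      ≤ (1/((m:ℝ)+1))^2 := by
    push_cast
    set P := ((m:ℝ)+1)^2 with hP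
    have hP0 : 0 < P := by positivity
    set d := 1/(24*(N:ℝ)*P+1) with hd
    have hd0 : 0 < d := by positivity
    have hd1 : d ≤ 1 := by
      rw [hd, div_le_one (by positivity)]
      nlinarith [mul_pos (lt_of_lt_of_le one_pos hN') hP0]
    have hdP : d * (24*(N:ℝ)*P) ≤ 1 := by
      rw [hd, one_div, inv_mul_le_iff₀ (by positivity)]; linarith
    rw [one_div_pow ((m:ℝ)+1), ← hP, le_div_iff₀ hP0]
    nlinarith [mul_pos hd0 hP0, mul_nonneg (mul_pos hd0 hP0).le (sub_nonneg.mpr hN'),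
      mul_nonneg (mul_pos hd0 hP0).le (sub_nonneg.mpr hd1)]
  refine ⟨convex_dist_le hs0 hs1 x1 v1, ?_, ?_⟩
  · exact le_of_sq_le_of_nonneg ((convex_approx hS hs0 hs1 x2 v2 hD).trans bound) (by positivity)
  · exact le_of_sq_le_of_nonneg ((convex_approx hT hs0 hs1 x3 v3 hD).trans bound) (by positivity)

/-! ### The quantitative projection argument -/

/-- Near-minimality of `‖u - ·‖²` towards the segment from `x` to `v`, evaluated at the
optimal step length `s = 1/(8N²(k+1))`, yields the variational inequality. -/
lemma inner_le_of_almost_min {N k : ℝ} (hN : 1 ≤ N) (hk : 0 ≤ k) {u x v : H}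
    (hD : ‖x - v‖ ≤ 2*N)
    (h : ∀ s : ℝ, 0 ≤ s → s ≤ 1 →
      ‖u - x‖^2 ≤ ‖u - ((1-s) • x + s • v)‖^2 + 1/(16*N^2*(k+1)^2)) :
    ⟪u - x, v - x⟫ ≤ 1/(k+1) := by
  have hN0 : 0 < N := by linarith
  set K := k + 1 with hK
  have hK1 : 1 ≤ K := by linarith
  have hK0 : 0 < K := by linarith
  set s := 1/(8*N^2*K) with hs
  have hs0 : 0 < s := by positivity
  have hs1 : s ≤ 1 := by
    rw [hs, div_le_one (by positivity)]
    nlinarith [mul_le_mul hN hN zero_le_one hN0.le]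
  have h1 := h s hs0.le hs1
  have e : u - ((1-s) • x + s • v) = (u - x) - s • (v - x) := by module
  rw [e, norm_sub_sq_real (u - x) (s • (v - x)), inner_smul_right, norm_smul, Real.norm_eq_abs, abs_of_pos hs0,
    norm_sub_rev v x] at h1
  have h2 : (s * ‖x - v‖)^2 ≤ (s*(2*N))^2 :=
    pow_le_pow_left₀ (by positivity) (mul_le_mul_of_nonneg_left hD hs0.le) 2
  have h3 : 1/(16*N^2*K^2) = s * (1/(2*K)) := by rw [hs]; field_simp; norm_num
  have h4 : (s*(2*N))^2 = s * (1/(2*K)) := by rw [hs]; field_simp; norm_num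
  have h5 : s * (2 * ⟪u - x, v - x⟫) ≤ s * (1/(2*K) + 1/(2*K)) := by linarith
  have h6 := le_of_mul_le_mul_left h5 hs0
  have h7 : 1/(2*K) + 1/(2*K) = 1/K := by field_simp; norm_num
  have h8 : 0 < 1/K := by positivity
  linarith

/-- `x` is an approximate projection of `u` onto the common fixed points of `S` and `T`: it is
fixed up to `1/(h M + 1)`, and satisfies the variational inequality against all points fixed up
to `1/(M + 1)`. -/
lemma exists_approx_proj {S T : H → H} (hS : ∀ x z, ‖S x - S z‖ ≤ ‖x - z‖)
    (hT : ∀ x z, ‖T x - T z‖ ≤ ‖x - z‖) {q u : H} (hSq : S q = q) (hTq : T q = q)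
    {N : ℕ} (hN : 1 ≤ N) (hu : 2*‖u - q‖ ≤ N) (k : ℕ) (h : ℕ → ℕ) :
    ∃ M ≤ zetaBound N k h, ∃ x ∈ ApproxFix S T q N (h M),
      ∀ v ∈ ApproxFix S T q N M, ⟪u - x, v - x⟫ ≤ 1/((k:ℝ)+1) := by
  set w : ℕ → ℕ := fun m => max (h (24*N*(m+1)^2)) (24*N*(m+1)^2) with hw
  set E := 4*N^4*(k+1)^2 with hE
  set ε : ℝ := 1/(16*(N:ℝ)^2*((k:ℝ)+1)^2) with hε
  have hN' : (1:ℝ) ≤ N := by exact_mod_cast hN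
  have hε0 : 0 < ε := by positivity
  have hwm : ∀ m, m ≤ w m := fun m => by
    refine le_trans ?_ (le_max_right _ _)
    nlinarith [Nat.mul_le_mul_right ((m+1)^2) hN]
  have hwit : Monotone (fun i => w^[i] 0) := by
    refine monotone_nat_of_le_succ fun i => ?_
    show w^[i] 0 ≤ w^[i+1] 0
    rw [Function.iterate_succ_apply']
    exact hwm _
  -- Some level `w^[i] 0` carries a point that is nearly closest to `u`.
  have key : ∃ i < E, ∃ x ∈ ApproxFix S T q N (w (w^[i] 0)),
      ∀ z ∈ ApproxFix S T q N (w^[i] 0), ‖u - x‖^2 ≤ ‖u - z‖^2 + ε := by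
    by_contra! hcon
    have chain : ∀ j ≤ E, ∃ x ∈ ApproxFix S T q N (w^[E - j] 0),
        ‖u - x‖^2 + j * ε ≤ (N:ℝ)^2/4 ∧ (0 < j → ‖u - x‖^2 + j * ε < (N:ℝ)^2/4) := by
      intro j
      induction j with
      | zero =>
        intro _
        refine ⟨q, ⟨by simp, ?_, ?_⟩, ?_, fun h => absurd h (lt_irrefl _)⟩
        · rw [hSq, sub_self, norm_zero]; positivity
        · rw [hTq, sub_self, norm_zero]; positivity
        · have := norm_nonneg (u - q)
          push_cast
          nlinarith
      | succ j ih =>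
        intro hj
        obtain ⟨x, hx, hx1, -⟩ := ih (by omega)
        have e : E - j = (E - (j+1)) + 1 := by omega
        rw [e, Function.iterate_succ_apply'] at hx
        obtain ⟨z, hz, hlt⟩ := hcon (E - (j+1)) (by omega) x hx
        refine ⟨z, hz, ?_, fun _ => ?_⟩ <;> push_cast <;> linarith
    have hE0 : 0 < E := by positivity
    obtain ⟨x, -, -, h2⟩ := chain E le_rfl
    have h3 := h2 hE0
    have h4 : (E:ℝ) * ε = (N:ℝ)^2/4 := by
      rw [hE, hε]; push_cast; field_simp; norm_num
    nlinarith [sq_nonneg ‖u - x‖]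
  obtain ⟨i, hi, x, hx, hmin⟩ := key
  refine ⟨24*N*(w^[i] 0+1)^2, ?_, x, ?_, ?_⟩
  · exact Nat.mul_le_mul_left _ (Nat.pow_le_pow_left (Nat.succ_le_succ (hwit hi.le)) 2)
  · exact approxFix_anti S T q N (le_max_left _ _) hx
  · intro v hv
    have hx' := approxFix_anti S T q N (le_max_right _ _) hx
    refine inner_le_of_almost_min hN' (Nat.cast_nonneg k) ?_ ?_
    · have := norm_sub_le_norm_sub_add_norm_sub x q v
      rw [norm_sub_rev q v] at this
      linarith [hx'.1, hv.1]
    · intro s hs0 hs1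
      exact hmin _ (approxFix_convex hS hT hN hs0 hs1 hx' hv)

lemma exists_approx_proj_seq {S T : H → H} (hS : ∀ x z, ‖S x - S z‖ ≤ ‖x - z‖)
    (hT : ∀ x z, ‖T x - T z‖ ≤ ‖x - z‖) {q u : H} (hSq : S q = q) (hTq : T q = q)
    {N : ℕ} (hN : 1 ≤ N) (hu : 2*‖u - q‖ ≤ N) {y : ℕ → H} (hyq : ∀ n, ‖y n - q‖ ≤ N)
    {η : ℕ → (ℕ → ℕ) → ℕ} (hηmono : MonoFunctional η)
    (hη : ∀ (k : ℕ) (f : ℕ → ℕ), Monotone f →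
      ∃ n ≤ η k f, ∀ m ∈ Set.Icc n (f n),
        ‖S (y m) - y m‖ ≤ 1/((k:ℝ)+1) ∧ ‖T (y m) - y m‖ ≤ 1/((k:ℝ)+1))
    (k : ℕ) {h : ℕ → ℕ} (hh : Monotone h) :
    ∃ n ≤ OmegaBound N η k h, ∃ x ∈ ApproxFix S T q N (h n),
      ∀ m ∈ Set.Icc n (h n), ⟪u - x, y m - x⟫ ≤ 1/((k:ℝ)+1) := by
  obtain ⟨M, hM, x, hx, hv⟩ :=
    exists_approx_proj hS hT hSq hTq hN hu k (fun m => h (η m h))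
  obtain ⟨n, hn, hy⟩ := hη M h hh
  refine ⟨n, hn.trans (hηmono _ _ _ _ hM (strongMaj_of_le hh le_rfl)), x,
    approxFix_anti S T q N (hh hn) hx, fun m hm => hv _ ⟨hyq m, hy m hm⟩⟩

/-! ### One step of the iteration -/

lemma step_bounded {A : H → Set H} (hA : MonotoneOp A) {q u y y' : H} (hq : (0:H) ∈ A q)
    {a b N : ℝ} (ha : a ∈ Set.Ioo (0:ℝ) 1) (hb : 0 < b)
    (hy' : (1/b) • (a • u + (1-a) • y - y') ∈ A y')
    (hu : ‖u - q‖ ≤ N) (hy : ‖y - q‖ ≤ N) : ‖y' - q‖ ≤ N := by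
  have h := hA _ _ _ _ hy' hq
  rw [sub_zero, inner_smul_right] at h
  have h2 := nonneg_of_mul_nonneg_right h (by positivity : 0 < 1/b)
  have e : a • u + (1-a) • y - y' = (a • u + (1-a) • y - q) - (y' - q) := by abel
  rw [e, inner_sub_right, real_inner_self_eq_norm_sq] at h2
  have h3 : ‖y' - q‖ ≤ ‖a • u + (1-a) • y - q‖ := norm_le_of_sq_le_inner (by linarith)
  have h4 := convex_dist_le ha.1.le ha.2.le hy hu
  rw [add_comm] at h4
  exact h3.trans h4

/-- One resolvent step towards an approximate zero `x`: the excess of `‖· - x‖²` over `c`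
contracts by `1 - a`, where `c` bounds `⟪u - x, y' - x⟫` at the new point `y'`. -/
lemma step_rec {A : H → Set H} (hA : MonotoneOp A) {R : ℕ} (hR : 1 ≤ R) {j : H → H}
    (hj : IsResolvent A R j) {q u x y y' : H} {a b N t δ c : ℝ}
    (ha : a ∈ Set.Ioo (0:ℝ) 1) (hb : 1/(R:ℝ) ≤ b) (hbt : b ≤ t)
    (hy' : (1/b) • (a • u + (1-a) • y - y') ∈ A y')
    (hu : ‖u - q‖ ≤ N) (hyq : ‖y - q‖ ≤ N) (hyq' : ‖y' - q‖ ≤ N) (hx : ‖x - q‖ ≤ N)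
    (hδ : ‖j x - x‖ ≤ δ) (hc : ⟪u - x, y' - x⟫ ≤ c) :
    max (‖y' - x‖^2 - c) 0 ≤ (1-a) * max (‖y - x‖^2 - c) 0 + 8*N*R*t*δ := by
  have hR0 : (0:ℝ) < R := by exact_mod_cast hR
  have hb0 : 0 < b := lt_of_lt_of_le (by positivity) hb
  have hbR : 1 ≤ b * R := by rwa [div_le_iff₀ hR0] at hb
  have htR : b * R ≤ t * R := mul_le_mul_of_nonneg_right hbt hR0.le
  have hN0 : 0 ≤ N := (norm_nonneg _).trans hu
  have hδ0 : 0 ≤ δ := (norm_nonneg _).trans hδ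
  set w := a • u + (1-a) • y with hw
  have hwq : ‖w - q‖ ≤ N := by
    have h4 := convex_dist_le ha.1.le ha.2.le hyq hu
    rwa [add_comm] at h4
  set g := x - j x with hg
  have hgn : ‖g‖ ≤ δ := by rw [hg, norm_sub_rev]; exact hδ
  have h := hA _ _ _ _ hy' (hj x)
  have e0 : (1/b) • (w - y') - (R:ℝ) • g = (1/b) • ((w - y') - (b*R) • g) := by
    rw [smul_sub (1/b) (w - y'), smul_smul]; congr 2; field_simp
  rw [e0, inner_smul_right] at h
  have h2 := nonneg_of_mul_nonneg_right h (by positivity : 0 < 1/b)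
  have e1 : y' - j x = (y' - x) + g := by rw [hg]; abel
  rw [e1, inner_add_left, inner_sub_right (y' - x) (w - y'), inner_sub_right g (w - y'),
    inner_smul_right, inner_smul_right, real_inner_self_eq_norm_sq] at h2
  have hyx : ‖y' - x‖ ≤ 2*N := by
    have := norm_sub_le_norm_sub_add_norm_sub y' q x
    rw [norm_sub_rev q x] at this
    linarith
  have hwy : ‖w - y'‖ ≤ 2*N := by
    have := norm_sub_le_norm_sub_add_norm_sub w q y'
    rw [norm_sub_rev q y'] at this
    linarith
  have i1 : -⟪y' - x, g⟫ ≤ 2*N*δ := by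
    have h3 := (abs_le.mp (abs_real_inner_le_norm (y' - x) g)).1
    have h4 := mul_le_mul hyx hgn (norm_nonneg _) (by linarith)
    linarith
  have i2 : ⟪g, w - y'⟫ ≤ δ*(2*N) :=
    (real_inner_le_norm _ _).trans (mul_le_mul hgn hwy (norm_nonneg _) hδ0)
  have i3 : (b*R) * (-⟪y' - x, g⟫) ≤ (t*R) * (2*N*δ) :=
    (mul_le_mul_of_nonneg_left i1 (by positivity)).trans
      (mul_le_mul_of_nonneg_right htR (by positivity))
  have i4 : δ*(2*N) ≤ (t*R) * (2*N*δ) := by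
    have : 0 ≤ 2*N*δ := by positivity
    nlinarith
  have i5 : 0 ≤ b*R*‖g‖^2 := by positivity
  have e2 : w - y' = a • (u - x) + (1-a) • (y - x) - (y' - x) := by rw [hw]; module
  have e3 : ⟪y' - x, w - y'⟫ =
      a * ⟪u - x, y' - x⟫ + (1-a) * ⟪y' - x, y - x⟫ - ‖y' - x‖^2 := by
    rw [e2, inner_sub_right, inner_add_right, inner_smul_right, inner_smul_right,
      real_inner_self_eq_norm_sq, real_inner_comm (u - x) (y' - x)]
  have i6 : ⟪y' - x, y - x⟫ ≤ (‖y' - x‖^2 + ‖y - x‖^2)/2 := by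
    have := real_inner_le_norm (y' - x) (y - x)
    nlinarith [sq_nonneg (‖y' - x‖ - ‖y - x‖)]
  have i7 := mul_le_mul_of_nonneg_left i6 (sub_nonneg.mpr ha.2.le)
  have i8 := mul_le_mul_of_nonneg_left hc ha.1.le
  have i9 : (1+a) * (‖y' - x‖^2 - c) ≤ (1-a) * (‖y - x‖^2 - c) + 8*N*R*t*δ := by
    nlinarith
  have j1 : (1-a) * (‖y - x‖^2 - c) ≤ (1-a) * max (‖y - x‖^2 - c) 0 :=
    mul_le_mul_of_nonneg_left (le_max_left _ _) (sub_nonneg.mpr ha.2.le)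
  have j2 : 0 ≤ (1-a) * max (‖y - x‖^2 - c) 0 :=
    mul_nonneg (sub_nonneg.mpr ha.2.le) (le_max_right _ _)
  have j3 : 0 ≤ 8*N*R*t*δ := by
    have : 0 ≤ t := hb0.le.trans hbt
    positivity
  refine max_le ?_ (by linarith)
  by_cases hs : ‖y' - x‖^2 - c ≤ 0
  · linarith
  · push Not at hs
    nlinarith [mul_pos ha.1 hs]

end Hilbert

/-! ### Iterating the recursion -/

lemma recursion_bound {r α : ℕ → ℝ} {e : ℝ} (he : 0 ≤ e) (hr : ∀ i, 0 ≤ r i)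
    (hα : ∀ n, α n ∈ Set.Ioo (0:ℝ) 1) {n P : ℕ}
    (h : ∀ j, n ≤ j → j < P → r (j+1) ≤ (1 - α j) * r j + e) (i : ℕ) (hi : n ≤ i) (hiP : i ≤ P) :
    r i ≤ Real.exp (-∑ j ∈ Finset.Ico n i, α j) * r n + i * e := by
  induction i, hi using Nat.le_induction with
  | base => simp; positivity
  | succ i hi ih =>
    have h1 := ih (by omega)
    have h2 := h i hi (by omega)
    have h3 : 1 - α i ≤ Real.exp (-α i) := by
      have := Real.add_one_le_exp (-α i); linarith
    have h4 : 0 ≤ 1 - α i := by linarith [(hα i).2]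
    rw [Finset.sum_Ico_succ_top hi, neg_add, Real.exp_add]
    have h5 := mul_le_mul_of_nonneg_left h1 h4
    have h6 : (1 - α i) * (i*e) ≤ i*e := by
      have : 0 ≤ α i * (i*e) := mul_nonneg (hα i).1.le (by positivity)
      linarith
    have h7 : (1 - α i) * (Real.exp (-∑ j ∈ Finset.Ico n i, α j) * r n) ≤
        Real.exp (-α i) * (Real.exp (-∑ j ∈ Finset.Ico n i, α j) * r n) :=
      mul_le_mul_of_nonneg_right h3 (mul_nonneg (Real.exp_pos _).le (hr n))
    push_cast
    linarith

lemma exp_sum_le {α : ℕ → ℝ} (hα : ∀ n, α n ∈ Set.Ioo (0:ℝ) 1) {Ar : ℕ → ℕ}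
    (hAr : ∀ k n : ℕ, (k : ℝ) ≤ ∑ i ∈ Finset.range (Ar k + n + 1), α i)
    {N : ℕ} (hN : 1 ≤ N) (k n i : ℕ) (hni : n ≤ i) (hi : sigma1 Ar N k n ≤ i) :
    Real.exp (-∑ j ∈ Finset.Ico n i, α j) ≤ 1/(16*(N:ℝ)^2*((k:ℝ)+1)) := by
  have hN' : (0:ℝ) < N := by exact_mod_cast hN
  set X := 16*(N:ℝ)^2*((k:ℝ)+1) with hX
  have hX0 : 0 < X := by positivity
  unfold sigma1 at hi
  rw [← hX] at hi
  have h1 := hAr (n + ⌈Real.log X⌉₊) (i - (Ar (n + ⌈Real.log X⌉₊) + 1))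
  have e : Ar (n + ⌈Real.log X⌉₊) + (i - (Ar (n + ⌈Real.log X⌉₊) + 1)) + 1 = i := by omega
  rw [e, ← Finset.sum_range_add_sum_Ico _ hni] at h1
  have h2 : ∑ j ∈ Finset.range n, α j ≤ n := by
    have := Finset.sum_le_sum (s := Finset.range n) (fun j _ => (hα j).2.le)
    simpa using this
  have h3 := Nat.le_ceil (Real.log X)
  push_cast at h1
  have h4 : Real.log X ≤ ∑ j ∈ Finset.Ico n i, α j := by linarith
  calc Real.exp (-∑ j ∈ Finset.Ico n i, α j) ≤ Real.exp (-Real.log X) :=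
        Real.exp_le_exp.mpr (by linarith)
    _ = 1/X := by rw [Real.exp_neg, Real.exp_log hX0, one_div]

lemma le_sigma1 {α : ℕ → ℝ} (hα : ∀ n, α n ∈ Set.Ioo (0:ℝ) 1) {Ar : ℕ → ℕ}
    (hAr : ∀ k n : ℕ, (k : ℝ) ≤ ∑ i ∈ Finset.range (Ar k + n + 1), α i) (N k n : ℕ) :
    n ≤ sigma1 Ar N k n := by
  unfold sigma1
  set L := ⌈Real.log (16*(N:ℝ)^2*((k:ℝ)+1))⌉₊
  have h1 := hAr (n + L) 0
  have h2 : ∑ j ∈ Finset.range (Ar (n+L) + 0 + 1), α j ≤ ((Ar (n+L) + 0 + 1 : ℕ):ℝ) := by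
    have := Finset.sum_le_sum (s := Finset.range (Ar (n+L) + 0 + 1)) (fun j _ => (hα j).2.le)
    simpa using this
  have h3 : n + L ≤ Ar (n+L) + 0 + 1 := by exact_mod_cast h1.trans h2
  omega

/-! ### Metastability of the even-indexed subsequence -/

/-- The even-indexed terms stay within `1/(k+1)` of an approximate projection `x` of `u`, on an
interval starting below `muTilde`. -/
lemma even_metastable {H : Type*} [NormedAddCommGroup H] [InnerProductSpace ℝ H]
    {A B : H → Set H} (hA : MonotoneOp A) (hB : MonotoneOp B)
    {R : ℕ} (hR : 1 ≤ R) {jA jB : H → H}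
    (hjA : IsResolvent A R jA) (hjB : IsResolvent B R jB)
    {u x₀ : H} {α lam β μ : ℕ → ℝ}
    (hα : ∀ n, α n ∈ Set.Ioo (0:ℝ) 1) (hlam : ∀ n, lam n ∈ Set.Ioo (0:ℝ) 1)
    {y : ℕ → H} (hy : MAR A B u x₀ α lam β μ y)
    {q : H} (hqA : (0:H) ∈ A q) (hqB : (0:H) ∈ B q)
    {N : ℕ} (hN1 : 1 ≤ N) (hu : 2*‖u - q‖ ≤ N) (hyq : ∀ n, ‖y n - q‖ ≤ N)
    {η : ℕ → (ℕ → ℕ) → ℕ} (hηmono : MonoFunctional η)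
    (hη : ∀ (k : ℕ) (f : ℕ → ℕ), Monotone f →
      ∃ n ≤ η k f, ∀ m ∈ Set.Icc n (f n),
        ‖jA (y m) - y m‖ ≤ 1/((k:ℝ)+1) ∧ ‖jB (y m) - y m‖ ≤ 1/((k:ℝ)+1))
    {Ar : ℕ → ℕ} (hArmono : Monotone Ar)
    (hAr : ∀ k n : ℕ, (k : ℝ) ≤ ∑ i ∈ Finset.range (Ar k + n + 1), α i)
    (hβ : ∀ n, β n ≥ 1/(R:ℝ)) (hμ : ∀ n, μ n ≥ 1/(R:ℝ))
    {t : ℕ → ℕ} (htmono : Monotone t)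
    (ht : ∀ n, max (β n) (μ n) ≤ (t n : ℝ))
    (k : ℕ) {f : ℕ → ℕ} (hf : Monotone f) :
    ∃ n ≤ muTilde Ar N R t η k f, ∃ x : H,
      ∀ i ∈ Set.Icc n (f n), ‖y (2*i) - x‖ ≤ 1/((k:ℝ)+1) := by
  have hR0 : (0:ℝ) < R := by exact_mod_cast hR
  have hN0 : (0:ℝ) < N := by exact_mod_cast hN1
  have hu1 : ‖u - q‖ ≤ N := by linarith [norm_nonneg (u - q)]
  obtain ⟨n, hn, x, hx, hin⟩ := exists_approx_proj_seq (resolvent_nonexp hA hR hjA)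
    (resolvent_nonexp hB hR hjB) (resolvent_zero hA hR hjA hqA) (resolvent_zero hB hR hjB hqB)
    hN1 hu hyq hηmono hη (16*(k+1)^2 - 1) (innerFun_mono hArmono N R htmono k hf)
  refine ⟨sigma1 Ar N ((k+1)^2 - 1) n, sigma1_mono hArmono N _ hn, x, ?_⟩
  rintro i ⟨hi1, hi2⟩
  set k' := (k+1)^2 - 1 with hk'
  set P := f (sigma1 Ar N k' n) with hP
  set h := innerFun Ar N R t k f n with hh
  have hk1 : 1 ≤ (k+1)^2 := Nat.one_le_pow _ _ (by omega)
  have ekt : ((k':ℕ):ℝ) + 1 = ((k:ℝ)+1)^2 := by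
    rw [hk', Nat.cast_sub hk1]; push_cast; ring
  have ekc : ((16*(k+1)^2 - 1 : ℕ):ℝ) + 1 = 16*((k:ℝ)+1)^2 := by
    rw [Nat.cast_sub (by omega)]; push_cast; ring
  set K := (k:ℝ)+1 with hK
  have hK0 : 0 < K := by positivity
  set c := 1/(16*K^2) with hc
  rw [ekc] at hin
  have hni : n ≤ i := (le_sigma1 hα hAr N k' n).trans hi1
  have htP : 1 ≤ t P := by
    have h1 : (0:ℝ) < t P :=
      lt_of_lt_of_le (by positivity) ((hβ P).trans ((le_max_left _ _).trans (ht P)))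
    exact_mod_cast h1
  -- `h + 1 = 2G + 1`, where `G` is large both as an index and as an accuracy.
  set G := 64*N*R*(k+1)^2*(P+1)*t P with hG
  have hGP : P + 1 ≤ G := by
    have h1 : 1 ≤ 64*N*R*(k+1)^2 := Nat.one_le_iff_ne_zero.mpr (by positivity)
    calc P + 1 = 1 * (P+1) * 1 := by ring
      _ ≤ G := Nat.mul_le_mul (Nat.mul_le_mul_right _ h1) htP
  have hhG : h = 2*(G - 1) + 2 := rfl
  have hhG' : h = 2*G := by omega
  set δ := 1/((h:ℝ)+1) with hδ
  have hδ0 : 0 < δ := by positivity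
  set e := 2*(8*(N:ℝ)*R*(t P)*δ) with he
  have he0 : 0 ≤ e := by positivity
  have hPe : (P:ℝ) * e ≤ 1/(8*K^2) := by
    have hGr : (G:ℝ) = 64*N*R*K^2*(P+1)*t P := by rw [hG]; push_cast; ring
    have hhr : (h:ℝ) = 2*G := by rw [hhG']; push_cast; ring
    have e1 : (P:ℝ)*e = (16*P*N*R*t P)/((h:ℝ)+1) := by rw [he, hδ]; ring
    rw [e1, div_le_div_iff₀ (by positivity) (by positivity), hhr, hGr]
    have : (0:ℝ) ≤ N*R*K^2*t P := by positivity
    nlinarith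
  have htj : ∀ j, j < P → β j ≤ t P ∧ μ j ≤ t P := by
    intro j hj
    have h1 : (t j:ℝ) ≤ t P := by exact_mod_cast htmono hj.le
    exact ⟨((le_max_left _ _).trans (ht j)).trans h1, ((le_max_right _ _).trans (ht j)).trans h1⟩
  have hrec : ∀ j, n ≤ j → j < P → max (‖y (2*(j+1)) - x‖^2 - c) 0 ≤
      (1 - α j) * max (‖y (2*j) - x‖^2 - c) 0 + e := by
    intro j hnj hjP
    have s1 := step_rec hA hR hjA (hα j) (hβ j) (htj j hjP).1 (hy.2 j).1 hu1 (hyq _) (hyq _)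
      hx.1 hx.2.1 (hin (2*j+1) ⟨by omega, by omega⟩)
    have s2 := step_rec hB hR hjB (hlam j) (hμ j) (htj j hjP).2 (hy.2 j).2 hu1 (hyq _) (hyq _)
      hx.1 hx.2.2 (hin (2*j+2) ⟨by omega, by omega⟩)
    have s3 : 0 ≤ lam j * max (‖y (2*j+1) - x‖^2 - c) 0 :=
      mul_nonneg (hlam j).1.le (le_max_right _ _)
    have e2 : 2*(j+1) = 2*j+2 := by ring
    rw [e2]
    linarith
  have hb := recursion_bound (r := fun j => max (‖y (2*j) - x‖^2 - c) 0) he0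
    (fun _ => le_max_right _ _) hα hrec i hni hi2
  have hexp := exp_sum_le hα hAr hN1 k' n i hni hi1
  rw [ekt] at hexp
  have hrn : max (‖y (2*n) - x‖^2 - c) 0 ≤ 4*(N:ℝ)^2 := by
    have h1 : ‖y (2*n) - x‖ ≤ 2*N := by
      have := norm_sub_le_norm_sub_add_norm_sub (y (2*n)) q x
      rw [norm_sub_rev q x] at this
      linarith [hx.1, hyq (2*n)]
    have h2 : 0 < c := by positivity
    refine max_le ?_ (by positivity)
    nlinarith [norm_nonneg (y (2*n) - x)]
  have h5 := mul_le_mul hexp hrn (le_max_right _ _) (by positivity)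
  have h6 : 1/(16*(N:ℝ)^2*K^2) * (4*(N:ℝ)^2) = 1/(4*K^2) := by field_simp; norm_num
  have h7 : (i:ℝ)*e ≤ P*e := mul_le_mul_of_nonneg_right (by exact_mod_cast hi2) he0
  have h8 := le_max_left (‖y (2*i) - x‖^2 - c) 0
  have h9 : ‖y (2*i) - x‖^2 ≤ 1/(4*K^2) + 1/(8*K^2) + 1/(16*K^2) := by
    linarith
  have h10 : 1/(4*K^2) + 1/(8*K^2) + 1/(16*K^2) = (7/16)*(1/K)^2 := by field_simp; norm_num
  refine le_of_sq_le_of_nonneg ?_ (by positivity)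
  nlinarith [sq_nonneg (1/K)]

theorem stmt12 {H : Type*} [NormedAddCommGroup H] [InnerProductSpace ℝ H]
    (A B : H → Set H) (hA : MonotoneOp A) (hB : MonotoneOp B)
    (R : ℕ) (hR : 1 ≤ R) (jA jB : H → H)
    (hjA : IsResolvent A R jA) (hjB : IsResolvent B R jB)
    (u x₀ : H) (α lam β μ : ℕ → ℝ)
    (hα : ∀ n, α n ∈ Set.Ioo (0:ℝ) 1) (hlam : ∀ n, lam n ∈ Set.Ioo (0:ℝ) 1)
    (hβpos : ∀ n, 0 < β n) (hμpos : ∀ n, 0 < μ n)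
    (y : ℕ → H) (hy : MAR A B u x₀ α lam β μ y)
    (q : H) (hqA : (0:H) ∈ A q) (hqB : (0:H) ∈ B q)
    (N : ℕ) (hN1 : 1 ≤ N)
    (hN : (N:ℝ) ≥ max (max (2*‖u - q‖) ‖x₀ - q‖) ‖q‖)
    (η : ℕ → (ℕ → ℕ) → ℕ) (hηmono : MonoFunctional η)
    (hη : ∀ (k : ℕ) (f : ℕ → ℕ), Monotone f →
      ∃ n ≤ η k f, ∀ m ∈ Set.Icc n (f n),
        ‖jA (y m) - y m‖ ≤ 1/((k:ℝ)+1) ∧ ‖jB (y m) - y m‖ ≤ 1/((k:ℝ)+1))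
    (Ar : ℕ → ℕ) (hArmono : Monotone Ar)
    (hAr : ∀ k n : ℕ, (k : ℝ) ≤ ∑ i ∈ Finset.range (Ar k + n + 1), α i)
    (hβ : ∀ n, β n ≥ 1/(R:ℝ)) (hμ : ∀ n, μ n ≥ 1/(R:ℝ))
    (t : ℕ → ℕ) (htmono : Monotone t)
    (ht : ∀ n, max (β n) (μ n) ≤ (t n : ℝ))
    (η' : ℕ → (ℕ → ℕ) → ℕ) (hη'mono : MonoFunctional η')
    (hη' : ∀ (k : ℕ) (f : ℕ → ℕ), Monotone f →
      ∃ n ≤ η' k f, ∀ m ∈ Set.Icc n (f n), ‖y (m+1) - y m‖ ≤ 1/((k:ℝ)+1))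
    (k : ℕ) (f : ℕ → ℕ) (hf : Monotone f) :
    ∃ n ≤ PsiBound
        (PhiMin (fun k' f' => η' (4*k'+3) (fun m => 2 * f' m))
          (fun k' f' => muTilde Ar N R t η (4*k'+3) f')) k f,
      ∀ i ∈ Set.Icc n (f n), ∀ j ∈ Set.Icc n (f n),
        ‖y i - y j‖ ≤ 1/((k:ℝ)+1) := by
  have hu : 2*‖u - q‖ ≤ N := (le_max_left _ _).trans ((le_max_left _ _).trans hN)
  have hx0 : ‖x₀ - q‖ ≤ N := (le_max_right _ _).trans ((le_max_left _ _).trans hN)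
  have hu1 : ‖u - q‖ ≤ N := by linarith [norm_nonneg (u - q)]
  have hodd : ∀ n, ‖y (2*n) - q‖ ≤ N → ‖y (2*n+1) - q‖ ≤ N := fun n h =>
    step_bounded hA hqA (hα n) (hβpos n) (hy.2 n).1 hu1 h
  have heven : ∀ n, ‖y (2*n) - q‖ ≤ N := by
    intro n
    induction n with
    | zero => rw [mul_zero, hy.1]; exact hx0
    | succ n ih => exact step_bounded hB hqB (hlam n) (hμpos n) (hy.2 n).2 hu1 (hodd n ih)
  have hyq : ∀ n, ‖y n - q‖ ≤ N := by
    intro n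
    rcases Nat.even_or_odd' n with ⟨m, rfl | rfl⟩
    · exact heven m
    · exact hodd m (heven m)
  have e4 : ((4*k+3 : ℕ):ℝ) + 1 = 4*((k:ℝ)+1) := by push_cast; ring
  have hg : Monotone (fun m => f (2*m+1)) := fun a b hab => hf (by omega)
  obtain ⟨n, hn, q₁, x, q₂⟩ := phiMin_spec
    (fun k' f' => η' (4*k'+3) (fun m => 2 * f' m))
    (fun k' f' => muTilde Ar N R t η (4*k'+3) f') k
    (fun a b => ∀ m ∈ Set.Icc a b, ‖y (2*m+1) - y (2*m)‖ ≤ 1/(4*((k:ℝ)+1)))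
    (fun a b => ∃ x : H, ∀ i ∈ Set.Icc a b, ‖y (2*i) - x‖ ≤ 1/(4*((k:ℝ)+1)))
    (fun a b a' b' h1 h2 h m hm => h m ⟨h1.trans hm.1, hm.2.trans h2⟩)
    (fun a b a' b' h1 h2 ⟨x, h⟩ => ⟨x, fun m hm => h m ⟨h1.trans hm.1, hm.2.trans h2⟩⟩)
    (by
      intro f' hf'
      obtain ⟨n, hn, h⟩ := hη' (4*k+3) (fun m => 2 * f' m)
        (fun a b hab => Nat.mul_le_mul_left 2 (hf' hab))
      rw [e4] at h
      refine ⟨n, hn, fun m hm => h (2*m) ⟨?_, ?_⟩⟩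
      · have := hm.1; omega
      · exact Nat.mul_le_mul_left 2 hm.2)
    (by
      intro f' hf'
      have h := even_metastable hA hB hR hjA hjB hα hlam hy hqA hqB hN1 hu hyq hηmono hη
        hArmono hAr hβ hμ htmono ht (4*k+3) hf'
      rwa [e4] at h)
    (fun f' g' _ hg' hfg => hη'mono _ _ _ _ le_rfl
      (strongMaj_of_le (fun a b hab => Nat.mul_le_mul_left 2 (hg' hab))
        (fun m => Nat.mul_le_mul_left 2 (hfg m))))
    (fun f' g' _ hg' hfg => muTilde_mono hArmono N R htmono hηmono _ hg' hfg)
    (fun m => f (2*m+1)) hg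
  refine ⟨2*n+1, by unfold PsiBound; omega, ?_⟩
  -- Every point of the interval is within `2/(4(k+1))` of `x`, via the preceding even index.
  have near : ∀ i ∈ Set.Icc (2*n+1) (f (2*n+1)), ‖y i - x‖ ≤ 2 * (1/(4*((k:ℝ)+1))) := by
    rintro i ⟨hi1, hi2⟩
    have hpos : (0:ℝ) ≤ 1/(4*((k:ℝ)+1)) := by positivity
    rcases Nat.even_or_odd' i with ⟨m, rfl | rfl⟩
    · have h1 := q₂ m ⟨by omega, by show m ≤ f (2*n+1); omega⟩
      linarith
    · have hm : m ∈ Set.Icc n (f (2*n+1)) := ⟨by omega, by omega⟩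
      have h1 := q₂ m hm
      have h2 := q₁ m hm
      have := norm_sub_le_norm_sub_add_norm_sub (y (2*m+1)) (y (2*m)) x
      linarith
  intro i hi j hj
  have h1 := near i hi
  have h2 := near j hj
  have h3 := norm_sub_le_norm_sub_add_norm_sub (y i) x (y j)
  rw [norm_sub_rev x (y j)] at h3
  have h4 : 2 * (1/(4*((k:ℝ)+1))) + 2 * (1/(4*((k:ℝ)+1))) = 1/((k:ℝ)+1) := by
    field_simp; norm_num
  linarith
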